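/- For every n ≥ 6, writing n = 2^a + b with a ≥ 2 and 0 < b ≤ 2^a, the permutation complexity of the Thue–Morse word satisfies τ(n) = 2·(2^{a+1} + b − 2). -/

import Mathlib

/-!
Write `S a` for the shift `T[a]`.  The Thue–Morse morphism `0 ↦ 01`, `1 ↦ 10` preserves the
lexicographic order, so `S (2a) ≺ S (2b)` iff `S a ≺ S b`.  Moreover the parity of a position and
its letter place the shift in one of four consecutive blocks:

  odd positions with letter 0 < even with 0 < even with 1 < odd with 1.

So an even position is compared with an odd one by the letter of the odd one alone, while two odd
positions `2a+1`, `2b+1` with equal letters compare as `a`, `b` do.  Consequently a subpermutation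
of length `N` starting at `2c` or `2c+1` carries exactly the information of a subpermutation of
about half the length starting at `c`, possibly with its last letter added or the comparison of
its two end positions removed.  Four equivalence relations on starting positions arise:

* `A N`: equal subpermutations of length `N` (`SamePerm N`);
* `B N`: in addition equal words of length `N` (`PermWord N`);
* `C (N+1)`: equal subpermutations of length `N+1`, up to the comparison of the two end
  positions (`OpenPerm N`);
* `D (N+1)`: in addition equal words of length `N+1` (`OpenPermWord N`).

As subpermutations of length at least 3 determine the parity of the starting position, the numbers
of classes satisfy a closed system of recurrences,

  `A(2k) = C(2k) = B(k) + C(k+1)`,  `A(2k+1) = A(k+1) + B(k+1)`,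
  `B(2k) = D(2k) = B(k) + D(k+1)`,  `B(2k+1) = 2 B(k+1)`,
  `C(2k+1) = C(k+1) + D(k+1)`,  `D(2k+1) = 2 D(k+1)`,

whose initial values `A(2)`, `B(2)`, `C(3)`, `D(3)` count the factors of length 1, 2, 2, 3.
The solution, for `N = 2^a + b` with `1 ≤ a` and `0 < b ≤ 2^a`, is
`A = 2^(a+2) + 2b - 4`, `B = A + 2`, `D = C + 2`, with `C = A` unless `b = 1`, in which case
`C = 3 * 2^a - 2`.
-/

/-- The Thue-Morse word: parity of the binary digit sum. -/
def TM (n : ℕ) : ℕ := (Nat.digits 2 n).sum % 2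

/-- `Prec a b` : the shift of the Thue-Morse word at `a` is lexicographically
smaller than the shift at `b`. -/
def Prec (a b : ℕ) : Prop :=
  ∃ c : ℕ, (∀ i < c, TM (a + i) = TM (b + i)) ∧ TM (a + c) < TM (b + c)

/-- The subpermutations of `π_T` of length `N` starting at `a` and `b` coincide. -/
def SamePerm (N a b : ℕ) : Prop :=
  ∀ i < N, ∀ j < N, (Prec (a + i) (a + j) ↔ Prec (b + i) (b + j))

open scoped Classical in
/-- `P a N i` : the 0-indexed rank of position `a+i` within the subpermutation
`π_T[a, a+N-1]`. -/
noncomputable def P (a N i : ℕ) : ℕ :=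
  ((Finset.range N).filter (fun j => Prec (a + j) (a + i))).card

/-- The subpermutations `π_T[a,a+N-1]` and `π_T[b,b+N-1]` have the same form. -/
def SameForm (N a b : ℕ) : Prop :=
  ∀ i < N - 1, (Prec (a + i) (a + (i + 1))) ↔ (Prec (b + i) (b + (i + 1)))

/-- The subpermutation `π_T[a,a+N-1]` is of type `k`. -/
def TypeK (k N a : ℕ) : Prop :=
  1 ≤ k ∧ 2 * k ≤ N ∧
  ∃ ε : ℤ, (ε = 1 ∨ ε = -1) ∧
    ∀ i < k, (P a N i : ℤ) = P a N (N - k + i) + ε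

/-- Positions `a` and `b` form a complementary pair of type `k` of length `N`. -/
def CompPair (k N a b : ℕ) : Prop :=
  1 ≤ k ∧ 2 * k ≤ N ∧
  ∃ ε : ℤ, (ε = 1 ∨ ε = -1) ∧
    (∀ i < k,
      (P a N i : ℤ) = P a N (N - k + i) + ε ∧
      (P b N i : ℤ) = P a N (N - k + i) ∧
      (P b N (N - k + i) : ℤ) = P a N i) ∧
    (∀ j, k ≤ j → j < N - k → P b N j = P a N j)

/-- The permutation complexity of the Thue-Morse word: the number of distinct
subpermutations of `π_T` of length `N`. -/
noncomputable def tau (N : ℕ) : ℕ :=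
  Set.ncard (Set.range (fun a : ℕ => fun i j : Fin N => Prec (a + i) (a + j)))

/-! ### Letters of the Thue–Morse word -/

lemma TM_lt (n : ℕ) : TM n < 2 := Nat.mod_lt _ (by norm_num)

lemma TM_even (n : ℕ) : TM (2 * n) = TM n := by
  rcases Nat.eq_zero_or_pos n with rfl | h
  · rfl
  · unfold TM
    rw [Nat.digits_def' (by norm_num) (by omega)]
    simp

lemma TM_odd (n : ℕ) : TM (2 * n + 1) = 1 - TM n := by
  unfold TM
  rw [Nat.digits_def' (by norm_num) (by omega)]
  have : (2 * n + 1) / 2 = n := by omega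
  simp only [List.sum_cons, this]
  omega

lemma TM_odd' (n : ℕ) : TM (2 * n + 1) = 1 - TM (2 * n) := by rw [TM_odd, TM_even]

lemma TM_even_add (n : ℕ) : TM (2 * n + 2) = TM (n + 1) := TM_even (n + 1)

/-- The Thue–Morse word has no factor `000` or `111`. -/
lemma TM_no_cube (n : ℕ) : ¬ (TM n = TM (n + 1) ∧ TM (n + 1) = TM (n + 2)) := by
  rintro ⟨h1, h2⟩
  rcases Nat.even_or_odd' n with ⟨k, rfl | rfl⟩
  · have := TM_odd' k
    have := TM_lt (2 * k)
    omega
  · have := TM_odd' (k + 1)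
    have := TM_lt (2 * (k + 1))
    have e1 : 2 * k + 1 + 1 = 2 * (k + 1) := by ring
    have e2 : 2 * k + 1 + 2 = 2 * (k + 1) + 1 := by ring
    rw [e1, e2] at h2
    omega

/-! ### The order of the shifts -/

lemma Prec.asymm {a b : ℕ} (h : Prec a b) : ¬ Prec b a := by
  rintro ⟨d, hd, hd'⟩
  obtain ⟨c, hc, hc'⟩ := h
  rcases lt_trichotomy c d with h | h | h
  · have := hd c h; omega
  · subst h; omega
  · have := hc d h; omega

lemma Prec.irrefl (a : ℕ) : ¬ Prec a a := fun h => h.asymm h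

lemma Prec.of_lt {a b : ℕ} (h : TM a < TM b) : Prec a b := ⟨0, by simp, h⟩

lemma prec_iff_of_ne {a b : ℕ} (h : TM a ≠ TM b) : Prec a b ↔ TM a < TM b := by
  refine ⟨fun hp => ?_, Prec.of_lt⟩
  by_contra hn
  exact hp.asymm (Prec.of_lt (by omega))

lemma prec_succ {a b : ℕ} (h : TM a = TM b) : Prec (a + 1) (b + 1) ↔ Prec a b := by
  constructor
  · rintro ⟨c, hc, hc'⟩
    refine ⟨c + 1, fun i hi => ?_, by convert hc' using 2 <;> ring⟩
    rcases i with _ | i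
    · exact h
    · convert hc i (by omega) using 2 <;> ring
  · rintro ⟨c, hc, hc'⟩
    rcases c with _ | c
    · simp only [add_zero] at hc'; omega
    · refine ⟨c, fun i hi => ?_, by convert hc' using 2 <;> ring⟩
      convert hc (i + 1) (by omega) using 2 <;> ring

/-- The Thue–Morse morphism preserves the lexicographic order. -/
lemma prec_even (a b : ℕ) : Prec (2 * a) (2 * b) ↔ Prec a b := by
  have e (a i : ℕ) : TM (2 * a + 2 * i) = TM (a + i) := by rw [← mul_add, TM_even]
  have o (a i : ℕ) : TM (2 * a + (2 * i + 1)) = 1 - TM (a + i) := by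
    rw [← TM_odd]; congr 1; ring
  constructor
  · rintro ⟨c, hc, hc'⟩
    rcases Nat.even_or_odd' c with ⟨k, rfl | rfl⟩
    · refine ⟨k, fun i hi => ?_, by simpa only [e] using hc'⟩
      simpa only [e] using hc (2 * i) (by omega)
    · have := hc (2 * k) (by omega)
      simp only [e, o] at this hc'
      omega
  · rintro ⟨k, hc, hc'⟩
    refine ⟨2 * k, fun i hi => ?_, by simpa only [e] using hc'⟩
    rcases Nat.even_or_odd' i with ⟨j, rfl | rfl⟩
    · simpa only [e] using hc j (by omega)
    · simp only [o, hc j (by omega)]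

lemma prec_odd {a b : ℕ} (h : TM a = TM b) :
    Prec (2 * a + 1) (2 * b + 1) ↔ Prec a b := by
  rw [prec_succ (by rw [TM_even, TM_even, h]), prec_even]

lemma prec_odd_ne {a b : ℕ} (h : TM a ≠ TM b) :
    Prec (2 * a + 1) (2 * b + 1) ↔ TM b < TM a := by
  have := TM_lt a
  have := TM_lt b
  rw [prec_iff_of_ne (by rw [TM_odd, TM_odd]; omega), TM_odd, TM_odd]
  omega

/-- The first four letters of the shifts at `2a` and `2b+1` decide their order. -/
lemma prec_mixed_aux (a b : ℕ) :
    (TM b = 0 → Prec (2 * a) (2 * b + 1)) ∧ (TM b = 1 → Prec (2 * b + 1) (2 * a)) := by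
  have a0 := TM_even a
  have a1 := TM_odd a
  have a2 := TM_even (a + 1)
  have a3 := TM_odd (a + 1)
  have b1 := TM_odd b
  have b2 := TM_even (b + 1)
  have b3 := TM_odd (b + 1)
  have b4 := TM_even (b + 2)
  have la := TM_lt a
  have la' := TM_lt (a + 1)
  have lb := TM_lt b
  have lb' := TM_lt (b + 1)
  have lb'' := TM_lt (b + 2)
  have hcube := TM_no_cube b
  simp only [mul_add, mul_one, Nat.reduceMul] at a2 a3 b2 b3 b4
  -- A difference among the first four letters exists, since otherwise `T b = T (b+1) = T (b+2)`.
  have key : ∀ x y : ℕ,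
      (TM x ≠ TM y ∨ TM (x + 1) ≠ TM (y + 1) ∨ TM (x + 2) ≠ TM (y + 2) ∨
        TM (x + 3) ≠ TM (y + 3)) →
      (TM x ≤ TM y) → (TM x = TM y → TM (x + 1) ≤ TM (y + 1)) →
      (TM x = TM y → TM (x + 1) = TM (y + 1) → TM (x + 2) ≤ TM (y + 2)) →
      (TM x = TM y → TM (x + 1) = TM (y + 1) → TM (x + 2) = TM (y + 2) →
        TM (x + 3) ≤ TM (y + 3)) → Prec x y := by
    intro x y h h0 h1 h2 h3
    by_cases e0 : TM x = TM y
    · rw [← prec_succ e0]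
      by_cases e1 : TM (x + 1) = TM (y + 1)
      · rw [← prec_succ e1]
        by_cases e2 : TM (x + 2) = TM (y + 2)
        · rw [← prec_succ e2]
          exact Prec.of_lt (show TM (x + 3) < TM (y + 3) by have := h3 e0 e1 e2; omega)
        · exact Prec.of_lt (show TM (x + 2) < TM (y + 2) by have := h2 e0 e1; omega)
      · exact Prec.of_lt (by have := h1 e0; omega)
    · exact Prec.of_lt (by omega)
  refine ⟨fun h => key _ _ ?_ ?_ ?_ ?_ ?_, fun h => key _ _ ?_ ?_ ?_ ?_ ?_⟩ <;>
  simp only [add_assoc, Nat.reduceAdd, a0, a1, a2, a3, b1, b2, b3, b4] <;> omega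

lemma prec_even_odd (a b : ℕ) : Prec (2 * a) (2 * b + 1) ↔ TM b = 0 := by
  refine ⟨fun h => ?_, (prec_mixed_aux a b).1⟩
  by_contra hb
  exact h.asymm ((prec_mixed_aux a b).2 (by have := TM_lt b; omega))

lemma prec_odd_even (a b : ℕ) : Prec (2 * b + 1) (2 * a) ↔ TM b = 1 := by
  refine ⟨fun h => ?_, (prec_mixed_aux a b).2⟩
  by_contra hb
  exact h.asymm ((prec_mixed_aux a b).1 (by have := TM_lt b; omega))

lemma prec_self_succ (a : ℕ) : Prec a (a + 1) ↔ TM a = 0 := by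
  have := TM_lt a
  have := TM_lt (a + 1)
  by_cases h : TM a = TM (a + 1)
  · have := TM_no_cube a
    rw [← prec_succ h, prec_iff_of_ne (show TM (a + 1) ≠ TM (a + 1 + 1) by tauto)]
    have := TM_lt (a + 1 + 1)
    have : TM (a + 1) ≠ TM (a + 1 + 1) := by tauto
    omega
  · rw [prec_iff_of_ne h]
    omega

/-! ### The four equivalence relations -/

/-- The factors of length `N` at `a` and `b` coincide. -/
def SameWord (N a b : ℕ) : Prop := ∀ i < N, TM (a + i) = TM (b + i)

/-- The subpermutations and the factors of length `N` at `a` and `b` coincide. Only the last letter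
is additional information. -/
def PermWord (N a b : ℕ) : Prop := SamePerm N a b ∧ SameWord N a b

/-- The subpermutations of length `N + 1` at `a` and `b` coincide, except possibly for the
comparison of the first with the last position. -/
def OpenPerm (N a b : ℕ) : Prop := SamePerm N a b ∧ SamePerm N (a + 1) (b + 1)

/-- `OpenPerm N` together with equality of the factors of length `N + 1`. -/
def OpenPermWord (N a b : ℕ) : Prop := OpenPerm N a b ∧ SameWord (N + 1) a b

lemma SamePerm.equivalence (N : ℕ) : Equivalence (SamePerm N) where
  refl _ _ _ _ _ := Iff.rfl
  symm h i hi j hj := (h i hi j hj).symm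
  trans h h' i hi j hj := (h i hi j hj).trans (h' i hi j hj)

lemma SameWord.equivalence (N : ℕ) : Equivalence (SameWord N) where
  refl _ _ _ := rfl
  symm h i hi := (h i hi).symm
  trans h h' i hi := (h i hi).trans (h' i hi)

lemma PermWord.equivalence (N : ℕ) : Equivalence (PermWord N) where
  refl _ := ⟨(SamePerm.equivalence N).refl _, (SameWord.equivalence N).refl _⟩
  symm h := ⟨(SamePerm.equivalence N).symm h.1, (SameWord.equivalence N).symm h.2⟩
  trans h h' := ⟨(SamePerm.equivalence N).trans h.1 h'.1, (SameWord.equivalence N).trans h.2 h'.2⟩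

lemma OpenPerm.equivalence (N : ℕ) : Equivalence (OpenPerm N) where
  refl _ := ⟨(SamePerm.equivalence N).refl _, (SamePerm.equivalence N).refl _⟩
  symm h := ⟨(SamePerm.equivalence N).symm h.1, (SamePerm.equivalence N).symm h.2⟩
  trans h h' := ⟨(SamePerm.equivalence N).trans h.1 h'.1, (SamePerm.equivalence N).trans h.2 h'.2⟩

lemma OpenPermWord.equivalence (N : ℕ) : Equivalence (OpenPermWord N) where
  refl _ := ⟨(OpenPerm.equivalence N).refl _, (SameWord.equivalence _).refl _⟩
  symm h := ⟨(OpenPerm.equivalence N).symm h.1, (SameWord.equivalence _).symm h.2⟩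
  trans h h' := ⟨(OpenPerm.equivalence N).trans h.1 h'.1, (SameWord.equivalence _).trans h.2 h'.2⟩

lemma SamePerm.mono {M N a b : ℕ} (hMN : M ≤ N) (h : SamePerm N a b) : SamePerm M a b :=
  fun i hi j hj => h i (by omega) j (by omega)

lemma SameWord.mono {M N a b : ℕ} (hMN : M ≤ N) (h : SameWord N a b) : SameWord M a b :=
  fun i hi => h i (by omega)

lemma SamePerm.tail {N a b : ℕ} (h : SamePerm (N + 1) a b) : SamePerm N (a + 1) (b + 1) :=
  fun i hi j hj => by
    simpa only [add_assoc, add_comm 1] using h (i + 1) (by omega) (j + 1) (by omega)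

lemma TM_eq_iff {a b : ℕ} : TM a = TM b ↔ (TM a = 0 ↔ TM b = 0) := by
  have := TM_lt a
  have := TM_lt b
  omega

/-- A subpermutation of length `N + 1` determines the factor of length `N`. -/
lemma SamePerm.sameWord {N a b : ℕ} (h : SamePerm (N + 1) a b) : SameWord N a b := fun i hi => by
  have := h i (by omega) (i + 1) (by omega)
  simp only [← add_assoc, prec_self_succ] at this
  exact TM_eq_iff.2 this

lemma SameWord.succ_iff {N a b : ℕ} :
    SameWord (N + 1) a b ↔ TM a = TM b ∧ SameWord N (a + 1) (b + 1) := by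
  constructor
  · intro h
    refine ⟨h 0 (by omega), fun i hi => ?_⟩
    simpa only [add_assoc, add_comm 1] using h (i + 1) (by omega)
  · rintro ⟨h0, h⟩ i hi
    rcases i with _ | i
    · exact h0
    · simpa only [add_assoc, add_comm 1] using h i (by omega)

lemma OpenPerm.sameWord {N a b : ℕ} (hN : 2 ≤ N) (h : OpenPerm N a b) : SameWord N a b := by
  obtain ⟨M, rfl⟩ : ∃ M, N = M + 1 := ⟨N - 1, by omega⟩
  exact SameWord.succ_iff.2 ⟨h.1.sameWord 0 (by omega), h.2.sameWord⟩

/-! ### Desubstitution -/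

/-- Equality, for `c` and `d`, of what determines the comparisons among the even positions
`2(c+s), …, 2(c+s+p-1)` and the odd positions `2c+1, …, 2(c+q-1)+1`: the subpermutations at half
of these positions, and the letters at half of the odd ones. Here `s` is `0` or `1` according to
the parity of the starting position. -/
def HalfData (s p q c d : ℕ) : Prop :=
  SamePerm p (c + s) (d + s) ∧ SamePerm q c d ∧ SameWord q c d

lemma odd_pair_iff {a b a' b' : ℕ} (ha : TM a = TM a') (hb : TM b = TM b') :
    (Prec (2 * a + 1) (2 * b + 1) ↔ Prec (2 * a' + 1) (2 * b' + 1)) ↔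
      (Prec a b ↔ Prec a' b') := by
  by_cases h : TM a = TM b
  · rw [prec_odd h, prec_odd (by omega)]
  · rw [prec_odd_ne h, prec_odd_ne (by omega), prec_iff_of_ne h, prec_iff_of_ne (by omega)]
    have := TM_lt a
    have := TM_lt b
    omega

lemma samePerm_even_start {N p q : ℕ} (hp : 1 ≤ p) (hN : N = p + q) (hpq : p = q ∨ p = q + 1)
    (c d : ℕ) : SamePerm N (2 * c) (2 * d) ↔ HalfData 0 p q c d := by
  have e (c i : ℕ) : 2 * c + 2 * i = 2 * (c + i) := by ring
  have o (c i : ℕ) : 2 * c + (2 * i + 1) = 2 * (c + i) + 1 := by ring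
  constructor
  · intro h
    have hw : SameWord q c d := fun i hi => by
      have := h 0 (by omega) (2 * i + 1) (by omega)
      simp only [add_zero, o, prec_even_odd] at this
      exact TM_eq_iff.2 this
    refine ⟨fun i hi j hj => ?_, fun i hi j hj => ?_, hw⟩
    · simpa only [e, prec_even, add_zero] using h (2 * i) (by omega) (2 * j) (by omega)
    · have := h (2 * i + 1) (by omega) (2 * j + 1) (by omega)
      rwa [o, o, o, o, odd_pair_iff (hw i hi) (hw j hj)] at this
  · rintro ⟨h1, h2, h3⟩ i hi j hj
    rcases Nat.even_or_odd' i with ⟨i, rfl | rfl⟩ <;>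
    rcases Nat.even_or_odd' j with ⟨j, rfl | rfl⟩
    · simpa only [e, prec_even, add_zero] using h1 i (by omega) j (by omega)
    · simp only [e, o, prec_even_odd, h3 j (by omega)]
    · simp only [e, o, prec_odd_even, h3 i (by omega)]
    · rw [o, o, o, o, odd_pair_iff (h3 i (by omega)) (h3 j (by omega))]
      exact h2 i (by omega) j (by omega)

lemma samePerm_odd_start {N p q : ℕ} (hp : 1 ≤ p) (hN : N = p + q) (hpq : p = q ∨ q = p + 1)
    (c d : ℕ) : SamePerm N (2 * c + 1) (2 * d + 1) ↔ HalfData 1 p q c d := by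
  have o (c i : ℕ) : 2 * c + 1 + 2 * i = 2 * (c + i) + 1 := by ring
  have e (c i : ℕ) : 2 * c + 1 + (2 * i + 1) = 2 * (c + 1 + i) := by ring
  constructor
  · intro h
    have hw : SameWord q c d := fun i hi => by
      have := h (2 * 0 + 1) (by omega) (2 * i) (by omega)
      simp only [e, o, prec_even_odd] at this
      exact TM_eq_iff.2 this
    refine ⟨fun i hi j hj => ?_, fun i hi j hj => ?_, hw⟩
    · simpa only [e, prec_even] using h (2 * i + 1) (by omega) (2 * j + 1) (by omega)
    · have := h (2 * i) (by omega) (2 * j) (by omega)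
      rwa [o, o, o, o, odd_pair_iff (hw i hi) (hw j hj)] at this
  · rintro ⟨h1, h2, h3⟩ i hi j hj
    rcases Nat.even_or_odd' i with ⟨i, rfl | rfl⟩ <;>
    rcases Nat.even_or_odd' j with ⟨j, rfl | rfl⟩
    · rw [o, o, o, o, odd_pair_iff (h3 i (by omega)) (h3 j (by omega))]
      exact h2 i (by omega) j (by omega)
    · simp only [e, o, prec_odd_even, h3 i (by omega)]
    · simp only [e, o, prec_even_odd, h3 j (by omega)]
    · simpa only [e, prec_even] using h1 i (by omega) j (by omega)

lemma samePerm_ee {k : ℕ} (hk : 1 ≤ k) (c d : ℕ) :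
    SamePerm (2 * k) (2 * c) (2 * d) ↔ PermWord k c d := by
  rw [samePerm_even_start hk (by omega) (Or.inl rfl)]
  exact ⟨fun h => h.2, fun h => ⟨h.1, h⟩⟩

lemma samePerm_oe {k : ℕ} (c d : ℕ) :
    SamePerm (2 * k + 1) (2 * c) (2 * d) ↔ SamePerm (k + 1) c d := by
  rw [samePerm_even_start (p := k + 1) (q := k) (by omega) (by omega) (Or.inr rfl)]
  exact ⟨fun h => h.1, fun h => ⟨h, h.mono (by omega), h.sameWord⟩⟩

lemma samePerm_eo {k : ℕ} (hk : 2 ≤ k) (c d : ℕ) :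
    SamePerm (2 * k) (2 * c + 1) (2 * d + 1) ↔ OpenPerm k c d := by
  rw [samePerm_odd_start (p := k) (q := k) (by omega) (by omega) (Or.inl rfl)]
  exact ⟨fun h => ⟨h.2.1, h.1⟩, fun h => ⟨h.2, h.1, h.sameWord hk⟩⟩

lemma samePerm_oo {k : ℕ} (hk : 1 ≤ k) (c d : ℕ) :
    SamePerm (2 * k + 1) (2 * c + 1) (2 * d + 1) ↔ PermWord (k + 1) c d := by
  rw [samePerm_odd_start (p := k) (q := k + 1) hk (by omega) (Or.inr rfl)]
  exact ⟨fun h => h.2, fun h => ⟨h.1.tail, h⟩⟩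

lemma sameWord_even_start {N q : ℕ} (hN : N = 2 * q ∨ N + 1 = 2 * q) (c d : ℕ) :
    SameWord N (2 * c) (2 * d) ↔ SameWord q c d := by
  have e (c i : ℕ) : TM (2 * c + 2 * i) = TM (c + i) := by rw [← mul_add, TM_even]
  have o (c i : ℕ) : TM (2 * c + (2 * i + 1)) = 1 - TM (c + i) := by
    rw [← TM_odd]; congr 1; ring
  constructor
  · intro h i hi
    simpa only [e] using h (2 * i) (by omega)
  · intro h i hi
    rcases Nat.even_or_odd' i with ⟨i, rfl | rfl⟩
    · simpa only [e] using h i (by omega)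
    · simp only [o, h i (by omega)]

lemma sameWord_odd_start {N q : ℕ} (hpos : 1 ≤ N) (hN : N + 1 = 2 * q ∨ N + 2 = 2 * q) (c d : ℕ) :
    SameWord N (2 * c + 1) (2 * d + 1) ↔ SameWord q c d := by
  have : SameWord N (2 * c + 1) (2 * d + 1) ↔ SameWord (N + 1) (2 * c) (2 * d) := by
    rw [SameWord.succ_iff]
    refine ⟨fun h => ⟨?_, h⟩, fun h => h.2⟩
    have := h 0 hpos
    simp only [add_zero, TM_odd'] at this
    have := TM_lt (2 * c)
    have := TM_lt (2 * d)
    omega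
  rw [this, sameWord_even_start (q := q) (by omega)]

/-- A subpermutation of length 3 determines the parity of its starting position. -/
lemma SamePerm.parity {N a b : ℕ} (hN : 3 ≤ N) (h : SamePerm N a b) : a % 2 = b % 2 := by
  have main (c d : ℕ) : ¬ SamePerm 3 (2 * c) (2 * d + 1) := by
    intro h
    have h0 := h.sameWord 0 (by omega)
    have h1 := h.sameWord 1 (by omega)
    have h2 := h 0 (by omega) 2 (by omega)
    have := TM_lt c
    have := TM_lt d
    have := TM_lt (d + 1)
    simp only [add_zero, add_assoc, Nat.reduceAdd, TM_even, TM_odd, TM_even_add] at h0 h1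
    rw [show 2 * c + 2 = 2 * (c + 1) by ring, show 2 * d + 1 + 2 = 2 * (d + 1) + 1 by ring,
      add_zero, add_zero, prec_even, prec_odd (by omega), prec_self_succ, prec_self_succ] at h2
    omega
  replace h := h.mono hN
  rcases Nat.even_or_odd' a with ⟨c, rfl | rfl⟩ <;>
  rcases Nat.even_or_odd' b with ⟨d, rfl | rfl⟩
  · omega
  · exact absurd h (main c d)
  · exact absurd ((SamePerm.equivalence 3).symm h) (main d c)
  · omega

/-! ### Counting classes -/

/-- The number of classes of an equivalence relation `R` on `ℕ`, as the number of distinct sets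
`{b | R a b}`. -/
noncomputable def classes (R : ℕ → ℕ → Prop) : ℕ∞ := (Set.range R).encard

lemma encard_range_congr {α β γ : Type*} {f : α → β} {g : α → γ}
    (h : ∀ x y, f x = f y ↔ g x = g y) : (Set.range f).encard = (Set.range g).encard := by
  have hk : Setoid.ker f = Setoid.ker g := Setoid.ext h
  refine Set.encard_congr ((Setoid.quotientKerEquivRange f).symm.trans ?_)
  rw [hk]
  exact Setoid.quotientKerEquivRange g

lemma Equivalence.eq_iff {R : ℕ → ℕ → Prop} (hR : Equivalence R) (a b : ℕ) :
    R a = R b ↔ R a b := by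
  constructor
  · intro h
    rw [h]
    exact hR.refl b
  · intro h
    ext x
    exact ⟨hR.trans (hR.symm h), hR.trans h⟩

lemma classes_congr {R S : ℕ → ℕ → Prop} (h : ∀ a b, R a b ↔ S a b) : classes R = classes S := by
  have : R = S := by ext a b; exact h a b
  rw [this]

lemma classes_split {R R₀ R₁ : ℕ → ℕ → Prop} (hR : Equivalence R) (h₀ : Equivalence R₀)
    (h₁ : Equivalence R₁) (hpar : ∀ a b, R a b → a % 2 = b % 2)
    (e₀ : ∀ c d, R (2 * c) (2 * d) ↔ R₀ c d)
    (e₁ : ∀ c d, R (2 * c + 1) (2 * d + 1) ↔ R₁ c d) :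
    classes R = classes R₀ + classes R₁ := by
  have hu : Set.range R = Set.range (fun c => R (2 * c)) ∪ Set.range (fun c => R (2 * c + 1)) := by
    ext S
    constructor
    · rintro ⟨a, rfl⟩
      rcases Nat.even_or_odd' a with ⟨c, rfl | rfl⟩
      · exact Or.inl ⟨c, rfl⟩
      · exact Or.inr ⟨c, rfl⟩
    · rintro (⟨c, rfl⟩ | ⟨c, rfl⟩) <;> exact ⟨_, rfl⟩
  have hd : Disjoint (Set.range (fun c => R (2 * c))) (Set.range (fun c => R (2 * c + 1))) := by
    rw [Set.disjoint_left]
    rintro _ ⟨c, rfl⟩ ⟨d, hd⟩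
    have := hpar _ _ ((hR.eq_iff _ _).1 hd)
    omega
  unfold classes
  rw [hu, Set.encard_union_eq hd]
  congr 1
  · exact encard_range_congr fun c d => by rw [hR.eq_iff, h₀.eq_iff, e₀]
  · exact encard_range_congr fun c d => by rw [hR.eq_iff, h₁.eq_iff, e₁]

lemma A_even {k : ℕ} (hk : 2 ≤ k) :
    classes (SamePerm (2 * k)) = classes (PermWord k) + classes (OpenPerm k) :=
  classes_split (SamePerm.equivalence _) (PermWord.equivalence _) (OpenPerm.equivalence _)
    (fun _ _ h => h.parity (by omega)) (samePerm_ee (by omega)) (samePerm_eo hk)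

lemma A_odd {k : ℕ} (hk : 1 ≤ k) :
    classes (SamePerm (2 * k + 1)) = classes (SamePerm (k + 1)) + classes (PermWord (k + 1)) :=
  classes_split (SamePerm.equivalence _) (SamePerm.equivalence _) (PermWord.equivalence _)
    (fun _ _ h => h.parity (by omega)) samePerm_oe (samePerm_oo hk)

lemma B_even {k : ℕ} (hk : 2 ≤ k) :
    classes (PermWord (2 * k)) = classes (PermWord k) + classes (OpenPermWord k) := by
  refine classes_split (PermWord.equivalence _) (PermWord.equivalence _)
    (OpenPermWord.equivalence _) (fun _ _ h => h.1.parity (by omega)) (fun c d => ?_)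
    (fun c d => ?_)
  · rw [PermWord, samePerm_ee (by omega), sameWord_even_start (Or.inl rfl)]
    exact ⟨fun h => h.1, fun h => ⟨h, h.2⟩⟩
  · rw [PermWord, samePerm_eo hk, sameWord_odd_start (q := k + 1) (by omega) (by omega),
      OpenPermWord]

lemma B_odd {k : ℕ} (hk : 1 ≤ k) :
    classes (PermWord (2 * k + 1)) = classes (PermWord (k + 1)) + classes (PermWord (k + 1)) := by
  refine classes_split (PermWord.equivalence _) (PermWord.equivalence _)
    (PermWord.equivalence _) (fun _ _ h => h.1.parity (by omega)) (fun c d => ?_)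
    (fun c d => ?_)
  · rw [PermWord, samePerm_oe, sameWord_even_start (q := k + 1) (by omega), PermWord]
  · rw [PermWord, samePerm_oo hk, sameWord_odd_start (q := k + 1) (by omega) (by omega)]
    exact ⟨fun h => h.1, fun h => ⟨h, h.2⟩⟩

lemma openPerm_oe {k : ℕ} (hk : 1 ≤ k) (c d : ℕ) :
    OpenPerm (2 * k + 1) (2 * c) (2 * d) ↔ PermWord (k + 1) c d := by
  rw [OpenPerm, samePerm_oe, samePerm_oo hk]
  exact ⟨fun h => h.2, fun h => ⟨h.1, h⟩⟩

lemma openPerm_oo {k : ℕ} (hk : 1 ≤ k) (c d : ℕ) :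
    OpenPerm (2 * k + 1) (2 * c + 1) (2 * d + 1) ↔ OpenPerm (k + 1) c d := by
  rw [OpenPerm, samePerm_oo hk]
  change _ ∧ SamePerm _ (2 * (c + 1)) (2 * (d + 1)) ↔ _
  rw [samePerm_oe]
  exact ⟨fun h => ⟨h.1.1, h.2⟩, fun h => ⟨⟨h.1, h.sameWord (by omega)⟩, h.2⟩⟩

lemma openPerm_ee {k : ℕ} (hk : 2 ≤ k) (c d : ℕ) :
    OpenPerm (2 * k) (2 * c) (2 * d) ↔ OpenPerm k c d := by
  rw [OpenPerm, samePerm_ee (by omega), samePerm_eo hk]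
  exact ⟨fun h => h.2, fun h => ⟨⟨h.1, h.sameWord hk⟩, h⟩⟩

lemma openPerm_eo {k : ℕ} (hk : 2 ≤ k) (c d : ℕ) :
    OpenPerm (2 * k) (2 * c + 1) (2 * d + 1) ↔ OpenPermWord k c d := by
  rw [OpenPerm, samePerm_eo hk]
  change _ ∧ SamePerm _ (2 * (c + 1)) (2 * (d + 1)) ↔ _
  rw [samePerm_ee (by omega), OpenPermWord, SameWord.succ_iff]
  exact ⟨fun h => ⟨h.1, h.1.sameWord hk 0 (by omega), h.2.2⟩, fun h => ⟨h.1, h.1.2, h.2.2⟩⟩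

lemma C_even {k : ℕ} (hk : 1 ≤ k) :
    classes (OpenPerm (2 * k + 1)) = classes (PermWord (k + 1)) + classes (OpenPerm (k + 1)) :=
  classes_split (OpenPerm.equivalence _) (PermWord.equivalence _) (OpenPerm.equivalence _)
    (fun _ _ h => h.1.parity (by omega)) (openPerm_oe hk) (openPerm_oo hk)

lemma C_odd {k : ℕ} (hk : 2 ≤ k) :
    classes (OpenPerm (2 * k)) = classes (OpenPerm k) + classes (OpenPermWord k) :=
  classes_split (OpenPerm.equivalence _) (OpenPerm.equivalence _) (OpenPermWord.equivalence _)
    (fun _ _ h => h.1.parity (by omega)) (openPerm_ee hk) (openPerm_eo hk)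

lemma D_even {k : ℕ} (hk : 1 ≤ k) :
    classes (OpenPermWord (2 * k + 1)) =
      classes (PermWord (k + 1)) + classes (OpenPermWord (k + 1)) := by
  refine classes_split (OpenPermWord.equivalence _) (PermWord.equivalence _)
    (OpenPermWord.equivalence _) (fun _ _ h => h.1.1.parity (by omega)) (fun c d => ?_)
    (fun c d => ?_)
  · rw [OpenPermWord, openPerm_oe hk, sameWord_even_start (q := k + 1) (by omega)]
    exact ⟨fun h => h.1, fun h => ⟨h, h.2⟩⟩
  · rw [OpenPermWord, openPerm_oo hk, sameWord_odd_start (q := k + 2) (by omega) (by omega),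
      OpenPermWord]

lemma D_odd {k : ℕ} (hk : 2 ≤ k) :
    classes (OpenPermWord (2 * k)) = classes (OpenPermWord k) + classes (OpenPermWord k) := by
  refine classes_split (OpenPermWord.equivalence _) (OpenPermWord.equivalence _)
    (OpenPermWord.equivalence _) (fun _ _ h => h.1.1.parity (by omega)) (fun c d => ?_)
    (fun c d => ?_)
  · rw [OpenPermWord, openPerm_ee hk, sameWord_even_start (q := k + 1) (by omega), OpenPermWord]
  · rw [OpenPermWord, openPerm_eo hk, sameWord_odd_start (q := k + 1) (by omega) (by omega)]
    exact ⟨fun h => h.1, fun h => ⟨h, h.2⟩⟩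

/-! ### Initial values -/

lemma samePerm_two (a b : ℕ) : SamePerm 2 a b ↔ SameWord 1 a b := by
  refine ⟨fun h => h.sameWord, fun h i hi j hj => ?_⟩
  have h0 := TM_eq_iff.1 (h 0 (by omega))
  have hrev (a : ℕ) : Prec (a + 1) a ↔ ¬ TM a = 0 := by
    rw [← prec_self_succ]
    refine ⟨fun h => h.asymm, fun h => ?_⟩
    rw [prec_self_succ] at h
    by_cases e : TM a = TM (a + 1)
    · have h3 := TM_no_cube a
      have := TM_lt (a + 1 + 1)
      rw [← prec_succ e.symm]
      exact Prec.of_lt (show TM (a + 1 + 1) < TM (a + 1) by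
        have : TM (a + 1) ≠ TM (a + 1 + 1) := by tauto
        have := TM_lt a
        omega)
    · have := TM_lt (a + 1)
      exact Prec.of_lt (by omega)
  simp only [add_zero] at h0
  interval_cases i <;> interval_cases j <;>
    simp [Prec.irrefl, hrev, prec_self_succ, h0]

lemma permWord_two (a b : ℕ) : PermWord 2 a b ↔ SameWord 2 a b :=
  ⟨fun h => h.2, fun h => ⟨(samePerm_two a b).2 (h.mono (by omega)), h⟩⟩

lemma openPerm_two (a b : ℕ) : OpenPerm 2 a b ↔ SameWord 2 a b :=
  ⟨fun h => h.sameWord le_rfl, fun h => ⟨(samePerm_two a b).2 (h.mono (by omega)),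
    (samePerm_two _ _).2 (SameWord.succ_iff.1 h).2⟩⟩

lemma openPermWord_two (a b : ℕ) : OpenPermWord 2 a b ↔ SameWord 3 a b :=
  ⟨fun h => h.2, fun h => ⟨(openPerm_two a b).2 (h.mono (by omega)), h⟩⟩

/-- If `f` reads the factor of length `N`, and `F` is the set of its values, then there are `#F`
factors of length `N`. -/
lemma classes_sameWord {N m : ℕ} {f : ℕ → ℕ} {F : Finset ℕ}
    (hf : ∀ a b, SameWord N a b ↔ f a = f b) (hF : ∀ a, f a ∈ F) (hF' : ∀ x ∈ F, ∃ a, f a = x)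
    (hm : F.card = m) : classes (SameWord N) = m := by
  have h1 : (Set.range (SameWord N)).encard = (Set.range f).encard :=
    encard_range_congr fun a b => by rw [(SameWord.equivalence N).eq_iff, hf]
  have h2 : Set.range f = F := by
    ext x
    exact ⟨fun ⟨a, ha⟩ => ha ▸ hF a, hF' x⟩
  rw [classes, h1, h2, Set.encard_coe_eq_coe_finsetCard, hm]

lemma A_two : classes (SamePerm 2) = 2 := by
  rw [classes_congr samePerm_two]
  refine classes_sameWord (f := TM) (F := {0, 1}) (m := 2) (fun a b => ?_) (fun a => ?_) ?_ rfl
  · exact ⟨fun h => h 0 (by omega), fun h i hi => by obtain rfl : i = 0 := by omega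
                                                     exact h⟩
  · have := TM_lt a
    simp only [Finset.mem_insert, Finset.mem_singleton]
    omega
  · intro x hx
    simp only [Finset.mem_insert, Finset.mem_singleton] at hx
    rcases hx with rfl | rfl
    · exact ⟨0, by decide⟩
    · exact ⟨1, by simp [TM]⟩

lemma classes_word_two : classes (SameWord 2) = 4 := by
  refine classes_sameWord (f := fun a => 2 * TM a + TM (a + 1)) (F := Finset.range 4) (m := 4)
    (fun a b => ?_) (fun a => ?_) ?_ rfl
  · have := TM_lt a
    have := TM_lt (a + 1)
    have := TM_lt b
    have := TM_lt (b + 1)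
    refine ⟨fun h => ?_, fun h i hi => ?_⟩
    · have h0 := h 0 (by omega)
      have h1 := h 1 (by omega)
      simp only [add_zero] at h0
      simp only [h0, h1]
    · interval_cases i <;> (try rw [add_zero, add_zero]) <;> omega
  · have := TM_lt a
    have := TM_lt (a + 1)
    simp only [Finset.mem_range]
    omega
  · intro x hx
    simp only [Finset.mem_range] at hx
    interval_cases x
    · exact ⟨5, by simp [TM]⟩
    · exact ⟨0, by simp [TM]⟩
    · exact ⟨2, by simp [TM]⟩
    · exact ⟨1, by simp [TM]⟩

lemma classes_word_three : classes (SameWord 3) = 6 := by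
  refine classes_sameWord (f := fun a => 4 * TM a + 2 * TM (a + 1) + TM (a + 2))
    (F := Finset.Icc 1 6) (m := 6) (fun a b => ?_) (fun a => ?_) ?_ rfl
  · have := TM_lt a
    have := TM_lt (a + 1)
    have := TM_lt (a + 2)
    have := TM_lt b
    have := TM_lt (b + 1)
    have := TM_lt (b + 2)
    refine ⟨fun h => ?_, fun h i hi => ?_⟩
    · have h0 := h 0 (by omega)
      have h1 := h 1 (by omega)
      have h2 := h 2 (by omega)
      simp only [add_zero] at h0
      simp only [h0, h1, h2]
    · interval_cases i <;> (try rw [add_zero, add_zero]) <;> omega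
  · have := TM_lt a
    have := TM_lt (a + 1)
    have := TM_lt (a + 2)
    have := TM_no_cube a
    simp only [Finset.mem_Icc]
    omega
  · intro x hx
    simp only [Finset.mem_Icc] at hx
    obtain ⟨hx1, hx6⟩ := hx
    interval_cases x
    · exact ⟨5, by simp [TM]⟩
    · exact ⟨3, by simp [TM]⟩
    · exact ⟨0, by simp [TM]⟩
    · exact ⟨4, by simp [TM]⟩
    · exact ⟨2, by simp [TM]⟩
    · exact ⟨1, by simp [TM]⟩

lemma B_two : classes (PermWord 2) = 4 := by
  rw [classes_congr permWord_two, classes_word_two]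

lemma C_three : classes (OpenPerm 2) = 4 := by
  rw [classes_congr openPerm_two, classes_word_two]

lemma D_three : classes (OpenPermWord 2) = 6 := by
  rw [classes_congr openPermWord_two, classes_word_three]

/-! ### Solving the recurrences -/

/-- The common value of the two open counts, `C (2^a + b)` and `D (2^a + b) - 2`. -/
def openCount (a b : ℕ) : ℕ := if b = 1 then 3 * 2 ^ a - 2 else 4 * 2 ^ a + 2 * b - 4

/-- The closed forms of all four counts at `N = M + 1 = 2^a + b`. -/
lemma closed_form (M : ℕ) : ∀ a b : ℕ, 1 ≤ a → 0 < b → b ≤ 2 ^ a → M + 1 = 2 ^ a + b →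
    classes (SamePerm (M + 1)) = ((4 * 2 ^ a + 2 * b - 4 : ℕ) : ℕ∞) ∧
    classes (PermWord (M + 1)) = ((4 * 2 ^ a + 2 * b - 2 : ℕ) : ℕ∞) ∧
    classes (OpenPerm M) = (openCount a b : ℕ∞) ∧
    classes (OpenPermWord M) = ((openCount a b + 2 : ℕ) : ℕ∞) := by
  induction M using Nat.strong_induction_on with
  | _ M ih =>
  intro a b ha hb hb' hM
  have hpow : 2 ≤ 2 ^ a := by
    calc 2 = 2 ^ 1 := rfl
      _ ≤ 2 ^ a := Nat.pow_le_pow_right (by norm_num) ha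
  rcases (by omega : M = 2 ∨ M = 3 ∨ 4 ≤ M) with rfl | rfl | hM4
  · obtain ⟨h1, rfl⟩ : 2 ^ a = 2 ∧ b = 1 := by omega
    have hA := A_odd (k := 1) le_rfl
    have hB := B_odd (k := 1) le_rfl
    norm_num [A_two, B_two] at hA hB
    norm_num [openCount, h1, hA, hB, C_three, D_three]
  · obtain ⟨h1, rfl⟩ : 2 ^ a = 2 ∧ b = 2 := by
      rcases Nat.lt_or_ge a 2 with h | h
      · obtain rfl : a = 1 := by omega
        omega
      · have : 2 ^ 2 ≤ 2 ^ a := Nat.pow_le_pow_right (by norm_num) h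
        omega
    have hA := A_even (k := 2) le_rfl
    have hB := B_even (k := 2) le_rfl
    have hC := C_even (k := 1) le_rfl
    have hD := D_even (k := 1) le_rfl
    norm_num [B_two, C_three, D_three] at hA hB hC hD
    norm_num [openCount, h1, hA, hB, hC, hD]
  · obtain ⟨a, rfl⟩ : ∃ a', a = a' + 1 := ⟨a - 1, by omega⟩
    have ha' : 1 ≤ a := by
      by_contra h
      obtain rfl : a = 0 := by omega
      norm_num at hb' hM
      omega
    have hpow' : 2 ≤ 2 ^ a := by
      calc 2 = 2 ^ 1 := rfl
        _ ≤ 2 ^ a := Nat.pow_le_pow_right (by norm_num) ha'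
    rw [pow_succ] at hM hb' hpow ⊢
    rcases Nat.even_or_odd' b with ⟨d, rfl | rfl⟩
    · obtain ⟨k, rfl⟩ : ∃ k, M = 2 * k + 1 := ⟨2 ^ a + d - 1, by omega⟩
      obtain ⟨-, hB, -, -⟩ := ih k (by omega) a d ha' (by omega) (by omega) (by omega)
      -- `k + 2 = 2^a + (d + 1)` lies in the next dyadic block when `d = 2^a`.
      have hnext : classes (OpenPerm (k + 1)) = ((6 * 2 ^ a - 2 + 2 * d - 2 * 2 ^ a : ℕ) : ℕ∞) ∧
          classes (OpenPermWord (k + 1)) = ((6 * 2 ^ a + 2 * d - 2 * 2 ^ a : ℕ) : ℕ∞) := by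
        by_cases hd : d = 2 ^ a
        · obtain ⟨-, -, hC, hD⟩ := ih (k + 1) (by omega) (a + 1) 1 (by omega) (by omega)
            (by omega) (by omega)
          rw [hC, hD, openCount, if_pos rfl, pow_succ]
          constructor <;> congr 1 <;> omega
        · obtain ⟨-, -, hC, hD⟩ := ih (k + 1) (by omega) a (d + 1) (by omega) (by omega)
            (by omega) (by omega)
          rw [hC, hD, openCount, if_neg (by omega)]
          constructor <;> congr 1 <;> omega
      obtain ⟨hC, hD⟩ := hnext
      have e : 2 * k + 1 + 1 = 2 * (k + 1) := by ring
      rw [e, A_even (by omega), B_even (by omega), C_even (by omega), D_even (by omega), hB, hC,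
        hD, openCount, if_neg (by omega), pow_succ]
      refine ⟨?_, ?_, ?_, ?_⟩ <;> norm_cast <;> omega
    · obtain ⟨k, rfl⟩ : ∃ k, M = 2 * k := ⟨2 ^ a + d, by omega⟩
      obtain ⟨hA, hB, hC, hD⟩ := ih k (by omega) a (d + 1) ha' (by omega) (by omega) (by omega)
      rw [A_odd (by omega), B_odd (by omega), C_odd (by omega), D_odd (by omega), hA, hB, hC, hD]
      unfold openCount
      rw [pow_succ]
      refine ⟨?_, ?_, ?_, ?_⟩ <;> norm_cast <;> (try split_ifs) <;> omega

lemma tau_eq (N : ℕ) : tau N = (classes (SamePerm N)).toNat := by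
  rw [tau, Set.ncard, classes]
  congr 1
  refine encard_range_congr fun a b => ?_
  rw [(SamePerm.equivalence N).eq_iff]
  constructor
  · intro h i hi j hj
    exact iff_of_eq (congrFun (congrFun h ⟨i, hi⟩) ⟨j, hj⟩)
  · intro h
    ext i j
    exact h i i.2 j j.2

/-- The permutation complexity of the Thue-Morse word: for `n = 2^a + b` with
`0 < b ≤ 2^a`, `τ(n) = 2(2^(a+1) + b - 2)`. -/
theorem tau_formula (n a b : ℕ) (hn : 6 ≤ n) (ha : 2 ≤ a)
    (hb0 : 0 < b) (hb : b ≤ 2 ^ a) (hnab : n = 2 ^ a + b) :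
    tau n = 2 * (2 ^ (a + 1) + b - 2) := by
  obtain ⟨M, rfl⟩ : ∃ M, n = M + 1 := ⟨n - 1, by omega⟩
  rw [tau_eq, (closed_form M a b (by omega) hb0 hb hnab).1, ENat.toNat_natCast, pow_succ]
  omega
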